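/- arXiv:1211.5344 — 3 statements merged into one kernel-verified Lean document; each statement's English description precedes it below -/
import Mathlib

section
/- Let t > 0 be a real number and let z = (z₁, z₂, z₃) ∈ ℂ³ be a nonzero point with z₁² + z₂² + z₃² = 0, and set w = F_t(z). Then |w|² = |z|² + t²/(4|z|²); equivalently |w| = √(|z|² + t²/(4|z|²)). -/
/-!
The equation `∑ i, z i ^ 2 = 0` says that `z` is Hermitian-orthogonal to its conjugate, which has
the same norm as `z`. By Pythagoras `z + c • conj z` has squared norm `(1 + |c|²) |z|²`, and
`c = t / (2 |z|²)` gives the formula.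
-/

open scoped ComplexConjugate

theorem normSq_add_mul_conj (c z : ℂ) :
    Complex.normSq (z + c * conj z) =
      (1 + Complex.normSq c) * Complex.normSq z + 2 * (conj c * z ^ 2).re := by
  have cross_term : z * conj (c * conj z) = conj c * z ^ 2 := by
    rw [map_mul, Complex.conj_conj]
    ring
  rw [Complex.normSq_add, cross_term, Complex.normSq_mul, Complex.normSq_conj]
  ring

section Fintype

variable {ι : Type*} [Fintype ι]

theorem sum_normSq_add_mul_conj (c : ℂ) (z : ι → ℂ) :
    ∑ i, Complex.normSq (z i + c * conj (z i)) =
      (1 + Complex.normSq c) * ∑ i, Complex.normSq (z i) + 2 * (conj c * ∑ i, z i ^ 2).re := by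
  simp only [normSq_add_mul_conj, Finset.sum_add_distrib, Finset.mul_sum, Complex.re_sum]

theorem sum_normSq_pos {z : ι → ℂ} (hz : z ≠ 0) : 0 < ∑ i, Complex.normSq (z i) := by
  obtain ⟨i, hi⟩ := Function.ne_iff.mp hz
  exact Finset.sum_pos' (fun j _ ↦ Complex.normSq_nonneg (z j))
    ⟨i, Finset.mem_univ i, Complex.normSq_pos.mpr hi⟩

theorem normSq_image_eq_general (t : ℂ) {z : ι → ℂ} (hz : z ≠ 0) (hcone : ∑ i, z i ^ 2 = 0) :
    ∑ i, Complex.normSq (z i + t / (2 * (∑ j, Complex.normSq (z j) : ℝ)) * conj (z i)) =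
      ∑ i, Complex.normSq (z i) + Complex.normSq t / (4 * ∑ i, Complex.normSq (z i)) := by
  have N_pos := sum_normSq_pos hz
  set N := ∑ i, Complex.normSq (z i)
  have scaled_norm : Complex.normSq (t / (2 * N)) * N = Complex.normSq t / (4 * N) := by
    rw [Complex.normSq_div, Complex.normSq_mul, Complex.normSq_ofReal, Complex.normSq_ofNat,
      div_mul_eq_mul_div, div_eq_div_iff (by positivity) (by positivity)]
    ring
  rw [sum_normSq_add_mul_conj, hcone, mul_zero, Complex.zero_re, mul_zero, add_zero, add_mul,
    one_mul, scaled_norm]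

end Fintype

/-- For real `t > 0` and a nonzero point `z = (z₁, z₂, z₃)` on the nodal cone
`z₁² + z₂² + z₃² = 0`, the image point `w = F_t(z)`, with
`wᵢ = zᵢ + (t/(2|z|²))·conj(zᵢ)`, satisfies `|w|² = |z|² + t²/(4|z|²)`. -/
theorem normSq_image_eq (t : ℝ) (ht : 0 < t) (z₁ z₂ z₃ : ℂ)
    (hz : ¬(z₁ = 0 ∧ z₂ = 0 ∧ z₃ = 0))
    (hcone : z₁ ^ 2 + z₂ ^ 2 + z₃ ^ 2 = 0)
    (w₁ w₂ w₃ : ℂ)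
    (hw₁ : w₁ = z₁ + ((t : ℂ) / (2 * ((Complex.normSq z₁ + Complex.normSq z₂ +
      Complex.normSq z₃ : ℝ) : ℂ))) * (starRingEnd ℂ) z₁)
    (hw₂ : w₂ = z₂ + ((t : ℂ) / (2 * ((Complex.normSq z₁ + Complex.normSq z₂ +
      Complex.normSq z₃ : ℝ) : ℂ))) * (starRingEnd ℂ) z₂)
    (hw₃ : w₃ = z₃ + ((t : ℂ) / (2 * ((Complex.normSq z₁ + Complex.normSq z₂ +
      Complex.normSq z₃ : ℝ) : ℂ))) * (starRingEnd ℂ) z₃) :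
    Complex.normSq w₁ + Complex.normSq w₂ + Complex.normSq w₃ =
      (Complex.normSq z₁ + Complex.normSq z₂ + Complex.normSq z₃) +
        t ^ 2 / (4 * (Complex.normSq z₁ + Complex.normSq z₂ + Complex.normSq z₃)) := by
  subst hw₁ hw₂ hw₃
  simpa [Fin.sum_univ_three, Complex.normSq_ofReal, sq] using
    normSq_image_eq_general (t : ℂ) (z := ![z₁, z₂, z₃]) (by simpa using hz)
      (by simpa [Fin.sum_univ_three] using hcone)
end

section
/- Let t > 0 be a real number. The map F_t, defined by F_t(z)ᵢ = zᵢ + (t/(2|z|²))·conj(zᵢ), is a bijection from {z ∈ ℂ³ : z₁² + z₂² + z₃² = 0 and |z|² > t/2} onto {w ∈ ℂ³ : w₁² + w₂² + w₃² = t and |w|² > t}. -/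
/-!
Write `J` for complex conjugation, so that `z₁² + z₂² + z₃² = ⟪J z, z⟫`, and let `r = |z|²`.
On the cone `⟪J z, z⟫ = 0` the vectors `z` and `J z` are orthogonal of equal length, so for
`c = t / (2r)` the vector `w = z + c J z` satisfies `⟪J w, w⟫ = 2cr = t` and
`|w|² = (1 + |c|²) r = r + (|t|/2)² / r`. The Joukowsky map `r ↦ r + a² / r` is a bijection from
`(a, ∞)` onto `(2a, ∞)`, so `|w|` determines `r` and hence `c`. As `|c| < 1`, the identity
`w - c J w = (1 - |c|²) z` recovers `z` from `w`. Only the fact that `J` is a conjugate-linear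
isometric involution matters.
-/

open Set
open scoped ComplexConjugate InnerProductSpace

theorem bijOn_add_sq_div {a : ℝ} (ha : 0 ≤ a) :
    BijOn (fun r : ℝ => r + a ^ 2 / r) (Ioi a) (Ioi (2 * a)) := by
  refine ⟨fun r (hr : a < r) => ?_, fun r (hr : a < r) s (hs : a < s) h => ?_,
    fun R (hR : 2 * a < R) => ?_⟩
  · have hr₀ : 0 < r := ha.trans_lt hr
    have hgap : r + a ^ 2 / r - 2 * a = (r - a) ^ 2 / r := by field_simp; ring
    have hpos : 0 < (r - a) ^ 2 / r := div_pos (pow_pos (sub_pos.2 hr) 2) hr₀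
    exact sub_pos.1 (hgap ▸ hpos)
  · have hr₀ : 0 < r := ha.trans_lt hr
    have hs₀ : 0 < s := ha.trans_lt hs
    have hprod : (r - s) * (r * s - a ^ 2) = 0 := by
      field_simp at h
      linear_combination h
    have hlt : a ^ 2 < r * s := by nlinarith
    exact sub_eq_zero.1 ((mul_eq_zero.1 hprod).resolve_right (sub_pos.2 hlt).ne')
  · have hsq : √(R ^ 2 - 4 * a ^ 2) ^ 2 = R ^ 2 - 4 * a ^ 2 := Real.sq_sqrt (by nlinarith)
    have hnonneg : 0 ≤ √(R ^ 2 - 4 * a ^ 2) := Real.sqrt_nonneg _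
    have hpos : 0 < R + √(R ^ 2 - 4 * a ^ 2) := by linarith
    -- the larger root of `r ^ 2 - R * r + a ^ 2 = 0`
    refine ⟨(R + √(R ^ 2 - 4 * a ^ 2)) / 2, show a < _ by linarith, ?_⟩
    dsimp only
    field_simp
    linear_combination hsq

theorem bijOn_symm_comp_comp {α β : Type*} (e : α ≃ β) {f : β → β} {s t : Set β}
    (hf : BijOn f s t) : BijOn (e.symm ∘ f ∘ e) (e ⁻¹' s) (e ⁻¹' t) :=
  (BijOn.equiv_symm e.bijective.bijOn_preimage).comp (hf.comp e.bijective.bijOn_preimage)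

theorem one_sub_norm_sq_ne_zero {F : Type*} [SeminormedAddGroup F] {c : F} (hc : ‖c‖ ≠ 1) :
    1 - ‖c‖ ^ 2 ≠ 0 :=
  sub_ne_zero.2 fun h => hc ((pow_eq_one_iff_of_nonneg (norm_nonneg c) two_ne_zero).1 h.symm)

theorem norm_div_two_mul_lt_one {𝕜 : Type*} [RCLike 𝕜] {t : 𝕜} {r : ℝ} (hr : ‖t‖ / 2 < r) :
    ‖t / (2 * (r : 𝕜))‖ < 1 := by
  have hr₀ : 0 < r := (by positivity : 0 ≤ ‖t‖ / 2).trans_lt hr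
  rw [norm_div, norm_mul, RCLike.norm_ofNat, RCLike.norm_of_nonneg hr₀.le,
    div_lt_one (by positivity)]
  linarith

section Conjugation

variable {𝕜 E : Type*} [RCLike 𝕜] [NormedAddCommGroup E] [InnerProductSpace 𝕜 E]
  (J : E →ₗᵢ⋆[𝕜] E)

/-- The affine quadric `V_t` of the quadratic form `z ↦ ⟪J z, z⟫` attached to a conjugation `J`.
For the coordinatewise conjugation of `ℂⁿ` this form is `z₁² + ⋯ + zₙ²`. -/
def quadric (t : 𝕜) : Set E := {w | ⟪J w, w⟫_𝕜 = t}

/-- The map `F_t` from the cone `quadric J 0` to the quadric `quadric J t`. The formula is used on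
the whole space; at `z = 0` its value is `0`, whatever `t / 0` is. -/
noncomputable def coneToQuadric (t : 𝕜) (z : E) : E :=
  z + (t / (2 * ((‖z‖ ^ 2 : ℝ) : 𝕜))) • J z

variable {J}

theorem mem_quadric {t : 𝕜} {w : E} : w ∈ quadric J t ↔ ⟪J w, w⟫_𝕜 = t := Iff.rfl

theorem smul_mem_quadric_zero_iff {a : 𝕜} (ha : a ≠ 0) {z : E} :
    a • z ∈ quadric J 0 ↔ z ∈ quadric J 0 := by
  simp [mem_quadric, LinearIsometry.map_smulₛₗ, inner_smul_left, inner_smul_right, ha]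

theorem norm_add_smul_conj_sq (c : 𝕜) (z : E) :
    ‖z + c • J z‖ ^ 2 = (1 + ‖c‖ ^ 2) * ‖z‖ ^ 2 + 2 * RCLike.re (conj c * ⟪J z, z⟫_𝕜) := by
  rw [norm_add_sq (𝕜 := 𝕜), norm_smul, J.norm_map, ← inner_conj_symm, inner_smul_left,
    RCLike.conj_re]
  ring

theorem norm_sub_smul_conj_sq {c : 𝕜} {r : ℝ} {w : E} (hw : w ∈ quadric J (2 * c * (r : 𝕜)))
    (hnorm : ‖w‖ ^ 2 = (1 + ‖c‖ ^ 2) * r) :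
    ‖w - c • J w‖ ^ 2 = (1 - ‖c‖ ^ 2) ^ 2 * r := by
  have hcross : conj c * (2 * c * (r : 𝕜)) = ((2 * ‖c‖ ^ 2 * r : ℝ) : 𝕜) := by
    push_cast
    linear_combination (2 * (r : 𝕜)) * RCLike.conj_mul c
  rw [sub_eq_add_neg, ← neg_smul, norm_add_smul_conj_sq, mem_quadric.1 hw, hnorm, norm_neg,
    map_neg, neg_mul, hcross, map_neg, RCLike.ofReal_re]
  ring

theorem inner_conj_add_smul_conj (hJ : Function.Involutive J) (c : 𝕜) (z : E) :
    ⟪J (z + c • J z), z + c • J z⟫_𝕜 =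
      ⟪J z, z⟫_𝕜 + 2 * c * ((‖z‖ ^ 2 : ℝ) : 𝕜) + c ^ 2 * conj ⟪J z, z⟫_𝕜 := by
  simp only [map_add, LinearIsometry.map_smulₛₗ, hJ z, inner_add_left, inner_add_right,
    inner_smul_left, inner_smul_right, inner_self_eq_norm_sq_to_K, J.norm_map, RCLike.conj_conj,
    inner_conj_symm]
  push_cast
  ring

theorem sub_smul_conj_mem_quadric_zero (hJ : Function.Involutive J) {c : 𝕜} {r : ℝ}
    {w : E} (hw : w ∈ quadric J (2 * c * (r : 𝕜))) (hnorm : ‖w‖ ^ 2 = (1 + ‖c‖ ^ 2) * r) :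
    w - c • J w ∈ quadric J 0 := by
  rw [sub_eq_add_neg, ← neg_smul, mem_quadric, inner_conj_add_smul_conj hJ, mem_quadric.1 hw,
    hnorm]
  simp only [map_mul, RCLike.conj_ofReal, map_ofNat]
  push_cast
  linear_combination (2 * c * (r : 𝕜)) * RCLike.mul_conj c

theorem sub_smul_conj_add_smul_conj (hJ : Function.Involutive J) (c : 𝕜) (z : E) :
    (z + c • J z) - c • J (z + c • J z) = ((1 - ‖c‖ ^ 2 : ℝ) : 𝕜) • z := by
  simp only [map_add, LinearIsometry.map_smulₛₗ, hJ z, smul_add, smul_smul, RCLike.mul_conj]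
  push_cast
  module

theorem bijective_add_smul_conj (hJ : Function.Involutive J) {c : 𝕜} (hc : ‖c‖ ≠ 1) :
    Function.Bijective fun z : E => z + c • J z := by
  have hα : ((1 - ‖c‖ ^ 2 : ℝ) : 𝕜) ≠ 0 := RCLike.ofReal_ne_zero.2 (one_sub_norm_sq_ne_zero hc)
  refine ⟨fun z z' (h : z + c • J z = z' + c • J z') => smul_right_injective E hα ?_, fun w =>
    ⟨((1 - ‖c‖ ^ 2 : ℝ) : 𝕜)⁻¹ • (w - c • J w), ?_⟩⟩
  · dsimp only
    rw [← sub_smul_conj_add_smul_conj hJ, h, sub_smul_conj_add_smul_conj hJ]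
  · have hinv : (w - c • J w) + c • J (w - c • J w) = ((1 - ‖c‖ ^ 2 : ℝ) : 𝕜) • w := by
      simpa [← sub_eq_add_neg] using sub_smul_conj_add_smul_conj hJ (-c) w
    dsimp only
    rw [LinearIsometry.map_smulₛₗ, map_inv₀, RCLike.conj_ofReal, smul_comm c, ← smul_add, hinv,
      inv_smul_smul₀ hα]

theorem add_smul_conj_mem_quadric_iff (hJ : Function.Involutive J) {c : 𝕜} (hc : ‖c‖ ≠ 1)
    {r : ℝ} {z : E} :
    z + c • J z ∈ quadric J (2 * c * (r : 𝕜)) ∧ ‖z + c • J z‖ ^ 2 = (1 + ‖c‖ ^ 2) * r ↔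
      z ∈ quadric J 0 ∧ ‖z‖ ^ 2 = r := by
  have hα : 1 - ‖c‖ ^ 2 ≠ 0 := one_sub_norm_sq_ne_zero hc
  constructor
  · rintro ⟨hw, hnorm⟩
    have hcone := sub_smul_conj_mem_quadric_zero hJ hw hnorm
    have hsq := norm_sub_smul_conj_sq hw hnorm
    rw [sub_smul_conj_add_smul_conj hJ] at hcone hsq
    rw [norm_smul, RCLike.norm_ofReal, mul_pow, sq_abs] at hsq
    exact ⟨(smul_mem_quadric_zero_iff (RCLike.ofReal_ne_zero.2 hα)).1 hcone,
      mul_left_cancel₀ (pow_ne_zero 2 hα) hsq⟩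
  · rintro ⟨hz, rfl⟩
    rw [mem_quadric, inner_conj_add_smul_conj hJ, norm_add_smul_conj_sq, mem_quadric.1 hz]
    simp

theorem add_div_smul_conj_mem_quadric_iff (hJ : Function.Involutive J) {t : 𝕜} {r : ℝ}
    (hr : ‖t‖ / 2 < r) {z : E} :
    z + (t / (2 * (r : 𝕜))) • J z ∈ quadric J t ∧
        ‖z + (t / (2 * (r : 𝕜))) • J z‖ ^ 2 = r + (‖t‖ / 2) ^ 2 / r ↔
      z ∈ quadric J 0 ∧ ‖z‖ ^ 2 = r := by
  have hr₀ : 0 < r := (by positivity : 0 ≤ ‖t‖ / 2).trans_lt hr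
  have hrK : (r : 𝕜) ≠ 0 := RCLike.ofReal_ne_zero.2 hr₀.ne'
  have hform : 2 * (t / (2 * (r : 𝕜))) * (r : 𝕜) = t := by field_simp
  have hnorm : (1 + ‖t / (2 * (r : 𝕜))‖ ^ 2) * r = r + (‖t‖ / 2) ^ 2 / r := by
    rw [norm_div, norm_mul, RCLike.norm_ofNat, RCLike.norm_of_nonneg hr₀.le]
    field_simp
  simpa only [hform, hnorm] using
    add_smul_conj_mem_quadric_iff hJ (norm_div_two_mul_lt_one hr).ne (r := r) (z := z)

theorem F_t_bijective_general (hJ : Function.Involutive J) (t : 𝕜) :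
    BijOn (coneToQuadric J t) {z ∈ quadric J 0 | ‖t‖ / 2 < ‖z‖ ^ 2}
      {w ∈ quadric J t | ‖t‖ < ‖w‖ ^ 2} := by
  have hjoukowsky := bijOn_add_sq_div (a := ‖t‖ / 2) (by positivity)
  rw [mul_div_cancel₀ _ two_ne_zero] at hjoukowsky
  have himage : ∀ z ∈ quadric J 0, ‖t‖ / 2 < ‖z‖ ^ 2 → coneToQuadric J t z ∈ quadric J t ∧
      ‖coneToQuadric J t z‖ ^ 2 = ‖z‖ ^ 2 + (‖t‖ / 2) ^ 2 / ‖z‖ ^ 2 :=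
    fun z hz hlt => (add_div_smul_conj_mem_quadric_iff hJ hlt).2 ⟨hz, rfl⟩
  refine ⟨fun z ⟨hz, hlt⟩ => ?_, fun z ⟨hz, hlt⟩ z' ⟨hz', hlt'⟩ heq => ?_, fun w ⟨hw, hlt⟩ => ?_⟩
  · obtain ⟨hmem, hnorm⟩ := himage z hz hlt
    exact ⟨hmem, hnorm ▸ hjoukowsky.mapsTo hlt⟩
  · have hnorm : ‖z‖ ^ 2 = ‖z'‖ ^ 2 := hjoukowsky.injOn hlt hlt' <| by
      rw [← (himage z hz hlt).2, ← (himage z' hz' hlt').2, heq]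
    rw [coneToQuadric, coneToQuadric, ← hnorm] at heq
    exact (bijective_add_smul_conj hJ (norm_div_two_mul_lt_one hlt).ne).injective heq
  · obtain ⟨r, hr, hrw⟩ := hjoukowsky.surjOn hlt
    obtain ⟨z, rfl⟩ := (bijective_add_smul_conj hJ (norm_div_two_mul_lt_one hr).ne).surjective w
    obtain ⟨hz, rfl⟩ := (add_div_smul_conj_mem_quadric_iff hJ hr).1 ⟨hw, hrw.symm⟩
    exact ⟨z, ⟨hz, hr⟩, rfl⟩

end Conjugation

section Coordinates

variable {𝕜 ι : Type*} [RCLike 𝕜] [Fintype ι]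

variable (𝕜 ι) in
/-- Coordinatewise complex conjugation on `𝕜ⁿ`, as a conjugate-linear isometry. -/
noncomputable def euclideanConj : EuclideanSpace 𝕜 ι →ₗᵢ⋆[𝕜] EuclideanSpace 𝕜 ι where
  toFun z := WithLp.toLp 2 fun i => conj (z i)
  map_add' z w := by ext; simp
  map_smul' a z := by ext; simp
  norm_map' z := by simp [EuclideanSpace.norm_eq]

theorem euclideanConj_apply (z : EuclideanSpace 𝕜 ι) (i : ι) :
    euclideanConj 𝕜 ι z i = conj (z i) := rfl

theorem involutive_euclideanConj : Function.Involutive (euclideanConj 𝕜 ι) := fun z => by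
  ext
  simp only [euclideanConj_apply, RCLike.conj_conj]

theorem mem_quadric_euclideanConj {t : 𝕜} {z : EuclideanSpace 𝕜 ι} :
    z ∈ quadric (euclideanConj 𝕜 ι) t ↔ ∑ i, z i ^ 2 = t := by
  simp [mem_quadric, PiLp.inner_apply, euclideanConj_apply, sq]

theorem coneToQuadric_euclideanConj_apply (t : 𝕜) (z : EuclideanSpace 𝕜 ι) (i : ι) :
    coneToQuadric (euclideanConj 𝕜 ι) t z i =
      z i + t / (2 * ((‖z‖ ^ 2 : ℝ) : 𝕜)) * conj (z i) := rfl

/-- The identification of triples of scalars with vectors of the Euclidean (Hermitian) space `𝕜³`;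
the product type itself carries the supremum norm. -/
@[simps]
def prodEquivEuclidean : 𝕜 × 𝕜 × 𝕜 ≃ EuclideanSpace 𝕜 (Fin 3) where
  toFun z := !₂[z.1, z.2.1, z.2.2]
  invFun w := (w 0, w 1, w 2)
  left_inv _ := rfl
  right_inv w := by ext i; fin_cases i <;> rfl

end Coordinates

/-- For real `t > 0`, the map `F_t(z)ᵢ = zᵢ + (t/(2|z|²))·conj(zᵢ)` is a bijection from
`{z ∈ ℂ³ : z₁² + z₂² + z₃² = 0, |z|² > t/2}` onto `{w ∈ ℂ³ : w₁² + w₂² + w₃² = t, |w|² > t}`. -/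
theorem F_t_bijective (t : ℝ) (ht : 0 < t) :
    Set.BijOn
      (fun z : ℂ × ℂ × ℂ =>
        (z.1 + ((t : ℂ) / (2 * ((Complex.normSq z.1 + Complex.normSq z.2.1 +
            Complex.normSq z.2.2 : ℝ) : ℂ))) * (starRingEnd ℂ) z.1,
         z.2.1 + ((t : ℂ) / (2 * ((Complex.normSq z.1 + Complex.normSq z.2.1 +
            Complex.normSq z.2.2 : ℝ) : ℂ))) * (starRingEnd ℂ) z.2.1,
         z.2.2 + ((t : ℂ) / (2 * ((Complex.normSq z.1 + Complex.normSq z.2.1 +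
            Complex.normSq z.2.2 : ℝ) : ℂ))) * (starRingEnd ℂ) z.2.2))
      {z : ℂ × ℂ × ℂ | z.1 ^ 2 + z.2.1 ^ 2 + z.2.2 ^ 2 = 0 ∧
        t / 2 < Complex.normSq z.1 + Complex.normSq z.2.1 + Complex.normSq z.2.2}
      {w : ℂ × ℂ × ℂ | w.1 ^ 2 + w.2.1 ^ 2 + w.2.2 ^ 2 = (t : ℂ) ∧
        t < Complex.normSq w.1 + Complex.normSq w.2.1 + Complex.normSq w.2.2} := by
  simpa [preimage, Function.comp_def, mem_quadric_euclideanConj, coneToQuadric_euclideanConj_apply,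
    EuclideanSpace.norm_sq_eq, Fin.sum_univ_three, Complex.normSq_eq_norm_sq, abs_of_pos ht] using
    bijOn_symm_comp_comp prodEquivEuclidean (F_t_bijective_general involutive_euclideanConj (t : ℂ))
end

section
/- Let X and Y be real Banach spaces, let E : X → Y be a map, let D : X → Y be a continuous linear equivalence (bounded invertible linear map), and define R(x) := E(x) − E(0) − D(x). Let C, L, r₀ > 0 be constants such that: (i) ‖R(x) − R(y)‖ ≤ L·‖x − y‖·(‖x‖ + ‖y‖) for all x, y in the closed ball of radius r₀ about 0 in X; (ii) the inverse of D has operator norm at most C. If r is a real number with 0 < r < min(r₀, 1/(2LC)) and ‖E(0)‖ ≤ r/(2C), then there exists a unique x ∈ X with ‖x‖ ≤ r and E(x) = 0. -/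
/-!
Applying `D⁻¹` turns `E x = 0` into `x + f x = a`, where `f = D⁻¹ ∘ R` inherits a quadratic estimate
with constant `C * L` and `‖a‖ = ‖D⁻¹ (E 0)‖ ≤ r / 2`. The solutions are the fixed points of
`x ↦ a - f x`, which is a contraction of the closed ball of radius `r` with constant
`2 * (C * L) * r < 1`. The Lipschitz constant alone would not keep this ball invariant: comparing
`f x` with `f 0 = 0` gains a factor of two, so that `‖f x‖ ≤ r / 2`.
-/

section

open Function Metric Set
open scoped NNReal

theorem existsUnique_isFixedPt_of_lipschitzOnWith {α : Type*} [MetricSpace α] {K : ℝ≥0} {g : α → α}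
    {s : Set α} (hs : IsComplete s) (hne : s.Nonempty) (hmaps : MapsTo g s s) (hK : K < 1)
    (hg : LipschitzOnWith K g s) : ∃! x, x ∈ s ∧ IsFixedPt g x := by
  have hcontr : ContractingWith K (hmaps.restrict g s s) := ⟨hK, hg.mapsToRestrict hmaps⟩
  obtain ⟨x₀, hx₀⟩ := hne
  obtain ⟨x, hxs, hx, -⟩ := hcontr.exists_fixedPoint' hs hmaps hx₀ (edist_ne_top _ _)
  refine ⟨x, ⟨hxs, hx⟩, fun y ⟨hys, hy⟩ ↦ ?_⟩
  exact congrArg Subtype.val <|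
    hcontr.fixedPoint_unique' (x := ⟨y, hys⟩) (y := ⟨x, hxs⟩) (Subtype.ext hy) (Subtype.ext hx)

/-- The quadratic estimate with constant `M` for a map `f` on a set `s`: the Lipschitz constant of
`f` degenerates linearly at the origin. It expresses that `f` has no linear part at `0`. -/
def QuadraticLipschitzOnWith {X Y : Type*} [SeminormedAddCommGroup X] [SeminormedAddCommGroup Y]
    (M : ℝ≥0) (f : X → Y) (s : Set X) : Prop :=
  ∀ x ∈ s, ∀ y ∈ s, ‖f x - f y‖ ≤ M * ‖x - y‖ * (‖x‖ + ‖y‖)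

namespace QuadraticLipschitzOnWith

section Seminormed

variable {X Y Z : Type*} [SeminormedAddCommGroup X] [SeminormedAddCommGroup Y]
  [SeminormedAddCommGroup Z] {M r : ℝ≥0} {f : X → Y} {s : Set X}

theorem lipschitzWith_comp {C : ℝ≥0} {g : Y → Z} (hg : LipschitzWith C g)
    (hf : QuadraticLipschitzOnWith M f s) : QuadraticLipschitzOnWith (C * M) (g ∘ f) s := by
  intro x hx y hy
  calc ‖g (f x) - g (f y)‖ ≤ C * ‖f x - f y‖ := hg.norm_sub_le _ _
    _ ≤ C * (M * ‖x - y‖ * (‖x‖ + ‖y‖)) := by gcongr; exact hf x hx y hy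
    _ = ↑(C * M) * ‖x - y‖ * (‖x‖ + ‖y‖) := by push_cast; ring

theorem lipschitzOnWith_closedBall (hf : QuadraticLipschitzOnWith M f (closedBall 0 r)) :
    LipschitzOnWith (2 * M * r) f (closedBall 0 r) := by
  refine lipschitzOnWith_iff_norm_sub_le.2 fun x hx y hy ↦ ?_
  calc ‖f x - f y‖ ≤ M * ‖x - y‖ * (‖x‖ + ‖y‖) := hf x hx y hy
    _ ≤ M * ‖x - y‖ * (r + r) := by
      gcongr
      exacts [mem_closedBall_zero_iff.1 hx, mem_closedBall_zero_iff.1 hy]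
    _ = ↑(2 * M * r) * ‖x - y‖ := by push_cast; ring

theorem norm_le_mul_sq (hf : QuadraticLipschitzOnWith M f s) (h0 : 0 ∈ s) (hf0 : f 0 = 0) {x : X}
    (hx : x ∈ s) : ‖f x‖ ≤ M * ‖x‖ ^ 2 := by
  simpa only [hf0, sub_zero, norm_zero, add_zero, mul_assoc, ← sq] using hf x hx 0 h0

theorem mapsTo_const_sub_closedBall {f : X → X} {a : X}
    (hf : QuadraticLipschitzOnWith M f (closedBall 0 r)) (hf0 : f 0 = 0) (hMr : 2 * M * r ≤ 1)
    (ha : ‖a‖ ≤ r / 2) : MapsTo (fun x ↦ a - f x) (closedBall 0 r) (closedBall 0 r) := by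
  intro x hx
  have hfx : ‖f x‖ ≤ r / 2 := calc
    ‖f x‖ ≤ M * ‖x‖ ^ 2 := hf.norm_le_mul_sq (mem_closedBall_self r.coe_nonneg) hf0 hx
    _ ≤ M * r ^ 2 := by gcongr; exact mem_closedBall_zero_iff.1 hx
    _ = ↑(2 * M * r) * (r / 2) := by push_cast; ring
    _ ≤ r / 2 := mul_le_of_le_one_left (by positivity) (mod_cast hMr)
  rw [mem_closedBall_zero_iff]
  linarith [norm_sub_le a (f x)]

end Seminormed

theorem existsUnique_add_eq {X : Type*} [NormedAddCommGroup X] [CompleteSpace X] {M r : ℝ≥0}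
    {f : X → X} {a : X} (hf : QuadraticLipschitzOnWith M f (closedBall 0 r)) (hf0 : f 0 = 0)
    (hMr : 2 * M * r < 1) (ha : ‖a‖ ≤ r / 2) : ∃! x, ‖x‖ ≤ r ∧ x + f x = a := by
  have hlip : LipschitzOnWith (2 * M * r) (fun x ↦ a - f x) (closedBall 0 r) := by
    simpa only [lipschitzOnWith_iff_norm_sub_le, sub_sub_sub_cancel_left, norm_sub_rev] using
      hf.lipschitzOnWith_closedBall
  simpa only [mem_closedBall_zero_iff, IsFixedPt, sub_eq_iff_eq_add, eq_comm (a := a)] using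
    existsUnique_isFixedPt_of_lipschitzOnWith isClosed_closedBall.isComplete
      (nonempty_closedBall.2 r.coe_nonneg) (hf.mapsTo_const_sub_closedBall hf0 hMr.le ha) hMr hlip

end QuadraticLipschitzOnWith

theorem quantitative_implicit_function_theorem_general {𝕜 X Y : Type*} [NontriviallyNormedField 𝕜]
    [NormedAddCommGroup X] [NormedSpace 𝕜 X] [CompleteSpace X]
    [NormedAddCommGroup Y] [NormedSpace 𝕜 Y]
    (E : X → Y) (D : X ≃L[𝕜] Y) (R : X → Y) (hR : ∀ x, R x = E x - E 0 - D x)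
    (C L r : ℝ) (hC : 0 < C) (hL : 0 ≤ L) (hr : 0 ≤ r)
    (hRlip : ∀ x y : X, ‖x‖ ≤ r → ‖y‖ ≤ r → ‖R x - R y‖ ≤ L * ‖x - y‖ * (‖x‖ + ‖y‖))
    (hDinv : ‖(D.symm : Y →L[𝕜] X)‖ ≤ C) (hLCr : 2 * L * C * r < 1)
    (hE0 : ‖E 0‖ ≤ r / (2 * C)) :
    ∃! x : X, ‖x‖ ≤ r ∧ E x = 0 := by
  lift C to ℝ≥0 using hC.le
  lift L to ℝ≥0 using hL
  lift r to ℝ≥0 using hr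
  have hquad : QuadraticLipschitzOnWith L R (closedBall 0 r) := fun x hx y hy ↦
    hRlip x y (mem_closedBall_zero_iff.1 hx) (mem_closedBall_zero_iff.1 hy)
  have hDlip : LipschitzWith C D.symm := (D.symm : Y →L[𝕜] X).lipschitzWith_of_opNorm_le hDinv
  have hR0 : D.symm (R 0) = 0 := by simp [hR]
  have hsmall : 2 * (C * L) * r < 1 := by
    rw [← NNReal.coe_lt_coe]
    push_cast
    linarith
  have ha : ‖-D.symm (E 0)‖ ≤ r / 2 := calc
    ‖-D.symm (E 0)‖ ≤ C * ‖E 0‖ := by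
      rw [norm_neg]
      exact hDlip.norm_le_mul D.symm.map_zero (E 0)
    _ ≤ C * (r / (2 * C)) := by gcongr
    _ = r / 2 := by field_simp
  have hzero (x : X) : x + D.symm (R x) = -D.symm (E 0) ↔ E x = 0 := by
    have hx : x + D.symm (R x) = D.symm (E x) - D.symm (E 0) := by
      simp only [hR, map_sub, D.symm_apply_apply]
      abel
    rw [hx, sub_eq_neg_self, D.symm.map_eq_zero_iff]
  simpa only [comp_apply, hzero] using
    (hquad.lipschitzWith_comp hDlip).existsUnique_add_eq hR0 hsmall ha

end

/-- Quantitative implicit function theorem between Banach spaces: if `E : X → Y` has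
invertible linearization `D` at `0` (with `‖D⁻¹‖ ≤ C`), the nonlinearities
`R(x) = E(x) − E(0) − D(x)` satisfy a quadratic estimate on the ball of radius `r₀`,
and for some `r < min(r₀, 1/(2LC))` the initial error satisfies `‖E(0)‖ ≤ r/(2C)`,
then `E(x) = 0` has a unique solution with `‖x‖ ≤ r`. -/
theorem quantitative_implicit_function_theorem
    {X Y : Type*} [NormedAddCommGroup X] [NormedSpace ℝ X] [CompleteSpace X]
    [NormedAddCommGroup Y] [NormedSpace ℝ Y] [CompleteSpace Y]
    (E : X → Y) (D : X ≃L[ℝ] Y)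
    (R : X → Y) (hR : ∀ x, R x = E x - E 0 - D x)
    (C L r₀ : ℝ) (hC : 0 < C) (hL : 0 < L) (hr₀ : 0 < r₀)
    (hRlip : ∀ x y : X, ‖x‖ ≤ r₀ → ‖y‖ ≤ r₀ →
      ‖R x - R y‖ ≤ L * ‖x - y‖ * (‖x‖ + ‖y‖))
    (hDinv : ‖(D.symm : Y →L[ℝ] X)‖ ≤ C)
    (r : ℝ) (hr : 0 < r) (hrmin : r < min r₀ (1 / (2 * L * C)))
    (hE0 : ‖E 0‖ ≤ r / (2 * C)) :
    ∃! x : X, ‖x‖ ≤ r ∧ E x = 0 := by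
  obtain ⟨hrr₀, hrLC⟩ := lt_min_iff.1 hrmin
  exact quantitative_implicit_function_theorem_general E D R hR C L r hC hL.le hr.le
    (fun x y hx hy ↦ hRlip x y (hx.trans hrr₀.le) (hy.trans hrr₀.le)) hDinv
    ((lt_div_iff₀' (by positivity)).1 hrLC) hE0
end
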